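/- arXiv:2002.11366 — 2 statements merged into one kernel-verified Lean document; each statement's English description precedes it below -/
import Mathlib

section
/- Let n be a positive integer with 5 ∣ n. Then the only positive integers x, y, z satisfying (35n² − 1)^x + (14n² + 1)^y = (7n)^z are (x, y, z) = (1, 1, 2). -/
/-!
Put `u = 7n²`. Reduction modulo `n` makes `x` odd, so the equation becomes
`(1 + 2u)^y - (1 - 5u)^x = (7n)^z`, and `x, y < z`. Suppose `z ≥ 3`.

Upper bound on `z`. Since `u^(z/2)` divides the left side and `x`, `y` are coprime, `1 + 2u` and
`1 - 5u` are congruent modulo `u^(z/2)` to the `x`-th and `y`-th powers of one `γ ≡ 1 (mod u)`. The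
box principle gives a nonzero form `∑ P_l(ξ) γ^(lξ)` divisible by a high power of `u` at every
natural number `ξ`: its forward differences at `0` are automatically divisible from some order on.
At `ξ = ry + sx` it is congruent to an integer too small to be a nonzero multiple of that power,
and so many zeros are ruled out by a determinant of Vandermonde type.

Lower bound on `z`. A relation `(1 + 2u)^a ≡ (1 - 5u)^b (mod M)` with `a` odd and `b` even, where
`M` divides `(7n)^z`, combines with the equation to `(1 + 2u)^(by) ≡ (1 + 2u)^(ax) (mod M)`. Lifting
the exponent gives `M ∣ u(by - ax)`, and `by ≠ ax` by parity, so `z ≥ M / (u max(a, b))`.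
For `n ≥ 15` a Padé approximation yields such a relation with `M = 35u⁴`; for `n = 5` there is an
explicit one with `M = 35¹⁰`. Both lower bounds exceed the upper one.
-/

section ForwardDifferences

open fwdDiff

variable {R : Type*} [CommRing R]

lemma fwdDiff_iter_natCast_mul (f : ℕ → R) (j t : ℕ) :
    (Δ_[1])^[j] (fun s : ℕ ↦ (s : R) * f s) t =
      t * (Δ_[1])^[j] f t + j * (Δ_[1])^[j - 1] f (t + 1) := by
  induction j generalizing t with
  | zero => simp
  | succ j ih =>
    rw [Function.iterate_succ_apply', fwdDiff, ih, ih]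
    cases j with
    | zero =>
      simp only [zero_add, Nat.sub_self, Function.iterate_one, Function.iterate_zero, id_eq,
        fwdDiff, Nat.cast_add, Nat.cast_one, Nat.cast_zero]
      ring
    | succ j =>
      simp only [Nat.add_sub_cancel, Function.iterate_succ_apply', fwdDiff]
      push_cast
      ring

lemma fwdDiff_iter_pow (g : R) (j t : ℕ) :
    (Δ_[1])^[j] (fun s : ℕ ↦ g ^ s) t = (g - 1) ^ j * g ^ t := by
  induction j generalizing t with
  | zero => simp
  | succ j ih =>
    rw [Function.iterate_succ_apply', fwdDiff, ih, ih]
    ring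

lemma pow_sub_dvd_fwdDiff_iter_pow_mul_pow {u g : R} (hg : u ∣ g - 1) (k j t : ℕ) :
    u ^ (j - k) ∣ (Δ_[1])^[j] (fun s : ℕ ↦ (s : R) ^ k * g ^ s) t := by
  induction k generalizing j t with
  | zero =>
    simp only [pow_zero, one_mul, Nat.sub_zero, fwdDiff_iter_pow]
    exact (pow_dvd_pow_of_dvd hg j).mul_right _
  | succ k ih =>
    simp only [pow_succ', mul_assoc, fwdDiff_iter_natCast_mul]
    refine dvd_add (((pow_dvd_pow u (by omega)).trans (ih j t)).mul_left _) (Dvd.dvd.mul_left ?_ _)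
    simpa only [Nat.sub_sub, add_comm 1 k] using ih (j - 1) (t + 1)

lemma dvd_of_forall_dvd_fwdDiff_iter_zero {d : R} {f : ℕ → R} (h : ∀ j, d ∣ (Δ_[1])^[j] f 0)
    (t : ℕ) : d ∣ f t := by
  have newton := shift_eq_sum_fwdDiff_iter 1 f t 0
  simp only [smul_eq_mul, mul_one, zero_add, nsmul_eq_mul] at newton
  rw [newton]
  exact Finset.dvd_sum fun j _ ↦ (h j).mul_left _

end ForwardDifferences

section Siegel

lemma exists_ne_zero_abs_lt_forall_dvd_sum {ι κ : Type*} [Fintype ι] [Fintype κ] {m B : ℕ}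
    (hm : m ≠ 0) (A : κ → ι → ℤ) (h : m ^ Fintype.card κ < B ^ Fintype.card ι) :
    ∃ p : ι → ℤ, p ≠ 0 ∧ (∀ i, |p i| < B) ∧ ∀ k, (m : ℤ) ∣ ∑ i, p i * A k i := by
  classical
  have : NeZero m := ⟨hm⟩
  let residues (p : ι → Fin B) (k : κ) : ZMod m := (∑ i, ((p i : ℕ) : ℤ) * A k i : ℤ)
  obtain ⟨p, q, hpq, heq⟩ := Fintype.exists_ne_map_eq_of_card_lt residues (by simpa using h)
  refine ⟨fun i ↦ (p i : ℕ) - (q i : ℕ), fun h0 ↦ hpq ?_, fun i ↦ ?_, fun k ↦ ?_⟩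
  · funext i
    have := congrFun h0 i
    simp only [Pi.zero_apply] at this
    omega
  · have := (p i).2
    have := (q i).2
    simp only [abs_lt]
    omega
  · have := (ZMod.intCast_eq_intCast_iff_dvd_sub _ _ m).mp (congrFun heq k).symm
    simpa only [sub_mul, Finset.sum_sub_distrib] using this

open Polynomial fwdDiff

lemma exists_polynomials_pow_dvd_sum_eval_mul_pow {u K L T e : ℕ} (hu : 2 ≤ u) {γ : ℤ}
    (hγ : (u : ℤ) ∣ γ - 1) (hcard : T * (T + K) < e * (K * L)) :
    ∃ P : Fin L → ℤ[X], P ≠ 0 ∧ (∀ l, (P l).natDegree < K) ∧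
      (∀ l k, |(P l).coeff k| ≤ (u : ℤ) ^ e) ∧
      ∀ ξ : ℕ, (u : ℤ) ^ T ∣ ∑ l, (P l).eval (ξ : ℤ) * γ ^ ((l : ℕ) * ξ) := by
  have hK : 1 ≤ K := Nat.pos_of_ne_zero fun h ↦ by simp [h] at hcard
  let monomialExp (i : Fin L × Fin K) (ξ : ℕ) : ℤ := (ξ : ℤ) ^ (i.2 : ℕ) * (γ ^ (i.1 : ℕ)) ^ ξ
  have hγl (l : ℕ) : (u : ℤ) ∣ γ ^ l - 1 := hγ.trans (by simpa using sub_dvd_pow_sub_pow γ 1 l)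
  obtain ⟨p, hp0, hpB, hp⟩ := exists_ne_zero_abs_lt_forall_dvd_sum (m := u ^ T) (B := u ^ e)
    (by positivity) (fun (j : Fin (T + K)) i ↦ (Δ_[1])^[j] (monomialExp i) 0) (by
      simp only [Fintype.card_fin, Fintype.card_prod, ← pow_mul]
      exact Nat.pow_lt_pow_right hu (by rwa [mul_comm L K]))
  push_cast at hpB hp
  refine ⟨fun l ↦ ofFn K fun k ↦ p (l, k), fun h0 ↦ hp0 ?_, fun l ↦ ofFn_natDegree_lt hK _,
    fun l k ↦ ?_, fun ξ ↦ ?_⟩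
  · ext ⟨l, k⟩
    simpa using congrArg (coeff · k) (congrFun h0 l)
  · rcases lt_or_ge k K with hk | hk
    · simpa [hk] using (hpB (l, ⟨k, hk⟩)).le
    · simp [hk]
  · have hsum : ∑ l, (ofFn K fun k ↦ p (l, k)).eval (ξ : ℤ) * γ ^ ((l : ℕ) * ξ) =
        (∑ i, p i • monomialExp i) ξ := by
      simp [ofFn_eq_sum_monomial, eval_finsetSum, Fintype.sum_prod_type, Finset.sum_mul,
        monomialExp, pow_mul, mul_assoc]
    rw [hsum]
    refine dvd_of_forall_dvd_fwdDiff_iter_zero (fun j ↦ ?_) ξ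
    rw [fwdDiff_iter_finsetSum, Finset.sum_apply]
    simp only [fwdDiff_iter_const_smul, Pi.smul_apply, smul_eq_mul]
    rcases lt_or_ge j (T + K) with hj | hj
    · exact hp ⟨j, hj⟩
    · refine Finset.dvd_sum fun i _ ↦ Dvd.dvd.mul_left ?_ _
      exact (pow_dvd_pow _ (by omega)).trans
        (pow_sub_dvd_fwdDiff_iter_pow_mul_pow (hγl i.1) i.2 j 0)

end Siegel

section ZeroEstimate

open Polynomial

lemma coeff_prod_sum_of_natDegree_le {R ι : Type*} [CommSemiring R] (s : Finset ι) {f : ι → R[X]}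
    {d : ι → ℕ} (h : ∀ i ∈ s, (f i).natDegree ≤ d i) :
    (∏ i ∈ s, f i).coeff (∑ i ∈ s, d i) = ∏ i ∈ s, (f i).coeff (d i) := by
  classical
  induction s using Finset.induction_on with
  | empty => simp
  | insert a s ha ih =>
    simp only [Finset.forall_mem_insert] at h
    rw [Finset.prod_insert ha, Finset.sum_insert ha, Finset.prod_insert ha, ← ih h.2]
    exact coeff_mul_add_eq_of_natDegree_le h.1
      ((natDegree_prod_le _ _).trans (Finset.sum_le_sum h.2))

section Determinant

variable {R n : Type*} [CommRing R] [Fintype n] [DecidableEq n] {M : Matrix n n R[X]} {d : n → ℕ}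

lemma natDegree_det_le_sum (h : ∀ i j, (M i j).natDegree ≤ d j) :
    M.det.natDegree ≤ ∑ j, d j := by
  rw [Matrix.det_apply]
  refine natDegree_sum_le_of_forall_le _ _ fun σ _ ↦ (natDegree_smul_le _ _).trans ?_
  exact (natDegree_prod_le _ _).trans (Finset.sum_le_sum fun j _ ↦ h _ j)

lemma coeff_det_sum_of_natDegree_le (h : ∀ i j, (M i j).natDegree ≤ d j) :
    M.det.coeff (∑ j, d j) = (Matrix.of fun i j ↦ (M i j).coeff (d j)).det := by
  simp only [Matrix.det_apply, finsetSum_coeff, coeff_smul, Matrix.of_apply,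
    coeff_prod_sum_of_natDegree_le _ fun j _ ↦ h _ j]

end Determinant

variable {R : Type*} [CommRing R] [IsDomain R]

lemma coeff_comp_X_add_C_natDegree (p : R[X]) (r : R) :
    (p.comp (X + C r)).coeff p.natDegree = p.leadingCoeff := by
  have := coeff_comp_degree_mul_degree (p := p) (q := X + C r) (by simp)
  rwa [natDegree_X_add_C, mul_one, leadingCoeff_X_add_C, one_pow, mul_one] at this

lemma card_le_sum_natDegree_of_sum_eval_mul_pow_eq_zero {m : ℕ} {P : Fin m → R[X]}
    (hP : ∀ j, P j ≠ 0) {a : Fin m → R} (ha : Function.Injective a) (v : Fin m → R)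
    {S : Finset R} (hS : ∀ ξ ∈ S, ∃ c : Fin m → R, c ≠ 0 ∧
      ∀ i, ∑ j, (P j).eval (ξ + v i) * a j ^ (i : ℕ) * c j = 0) :
    S.card ≤ ∑ j, (P j).natDegree := by
  let M : Matrix (Fin m) (Fin m) R[X] :=
    .of fun i j ↦ (P j).comp (X + C (v i)) * C (a j ^ (i : ℕ))
  have hdeg (i j) : (M i j).natDegree ≤ (P j).natDegree :=
    (natDegree_mul_C_le ((P j).comp (X + C (v i))) _).trans
      (by rw [natDegree_comp, natDegree_X_add_C, mul_one])
  have hcoeff : M.det.coeff (∑ j, (P j).natDegree) =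
      (∏ j, (P j).leadingCoeff) * (Matrix.vandermonde a).transpose.det := by
    rw [coeff_det_sum_of_natDegree_le hdeg, ← Matrix.det_mul_row]
    congr 1
    ext i j
    simp only [M, Matrix.of_apply, coeff_mul_C, coeff_comp_X_add_C_natDegree,
      Matrix.transpose_apply, Matrix.vandermonde_apply]
  have hdet : M.det ≠ 0 := by
    intro h0
    rw [h0, coeff_zero, Matrix.det_transpose, eq_comm, mul_eq_zero] at hcoeff
    refine hcoeff.elim (fun h ↦ ?_) (Matrix.det_vandermonde_ne_zero_iff.mpr ha)
    obtain ⟨j, -, hj⟩ := Finset.prod_eq_zero_iff.mp h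
    exact hP j (leadingCoeff_eq_zero.mp hj)
  refine le_trans (card_le_degree_of_subset_roots fun ξ hξ ↦ ?_) (natDegree_det_le_sum hdeg)
  obtain ⟨c, hc, hsum⟩ := hS ξ hξ
  rw [mem_roots hdet, IsRoot, ← coe_evalRingHom, RingHom.map_det,
    ← Matrix.exists_mulVec_eq_zero_iff]
  refine ⟨c, hc, funext fun i ↦ ?_⟩
  simpa [Matrix.mulVec, dotProduct, M] using hsum i

lemma card_le_card_mul_of_sum_eval_mul_pow_eq_zero {ι : Type*} [Fintype ι] {P : ι → R[X]}
    (hP : P ≠ 0) {D : ℕ} (hD : ∀ j, (P j).natDegree ≤ D) {a : ι → R}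
    (ha : Function.Injective a) (v : ℕ → R) {S : Finset R}
    (hS : ∀ ξ ∈ S, ∃ c : ι → R, (∀ j, c j ≠ 0) ∧ ∀ i < Fintype.card ι,
      ∑ j, (P j).eval (ξ + v i) * a j ^ i * c j = 0) :
    S.card ≤ Fintype.card ι * D := by
  classical
  let supp : Finset ι := {j | P j ≠ 0}
  let e : Fin supp.card ≃ supp := supp.equivFin.symm
  have hsupp (j) : P (e j) ≠ 0 := (Finset.mem_filter.mp (e j).2).2
  have hcard : supp.card ≤ Fintype.card ι := Finset.card_le_univ supp
  have hne : 0 < supp.card := by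
    obtain ⟨j, hj⟩ := Function.ne_iff.mp hP
    exact Finset.card_pos.mpr ⟨j, Finset.mem_filter.mpr ⟨Finset.mem_univ j, hj⟩⟩
  calc S.card ≤ ∑ j, (P (e j)).natDegree := by
        refine card_le_sum_natDegree_of_sum_eval_mul_pow_eq_zero hsupp
          (ha.comp (Subtype.val_injective.comp e.injective)) (fun i ↦ v i) fun ξ hξ ↦ ?_
        obtain ⟨c, hc, hsum⟩ := hS ξ hξ
        refine ⟨fun j ↦ c (e j), fun h0 ↦ hc _ (congrFun h0 ⟨0, hne⟩), fun i ↦ ?_⟩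
        rw [← hsum i (i.2.trans_le hcard),
          ← Finset.sum_subset (Finset.subset_univ supp) fun j _ hj ↦ by
            simp [show P j = 0 by simpa [supp] using hj],
          ← Finset.sum_coe_sort supp]
        exact e.sum_comp fun j ↦ (P j).eval (ξ + v i) * a j ^ (i : ℕ) * c j
    _ ≤ supp.card * D := (Finset.sum_le_sum fun j _ ↦ hD (e j)).trans_eq (by simp)
    _ ≤ Fintype.card ι * D := Nat.mul_le_mul_right D hcard

lemma injOn_mul_add_mul_of_coprime {x y : ℕ} (hxy : x.Coprime y) :
    Set.InjOn (fun rs : ℕ × ℕ ↦ rs.1 * y + rs.2 * x) {rs | rs.1 < x} := by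
  rintro ⟨r, s⟩ hr ⟨r', s'⟩ hr' h
  simp only [Set.mem_ofPred_eq] at hr hr' h
  have hmod : r * y ≡ r' * y [MOD x] := by
    simpa [Nat.ModEq] using congrArg (· % x) h
  obtain rfl : r = r' := (hmod.cancel_right_of_coprime hxy).eq_of_lt_of_lt hr hr'
  simpa [(Nat.zero_lt_of_lt hr).ne'] using h

lemma injOn_mul_add_mul_of_le {x y M : ℕ} (hxy : x.Coprime y) (hM : M ≤ max x y) :
    Set.InjOn (fun rs : ℕ × ℕ ↦ rs.1 * y + rs.2 * x) (Finset.range M ×ˢ Finset.range M) := by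
  rcases le_max_iff.mp hM with hx | hy
  · refine (injOn_mul_add_mul_of_coprime hxy).mono fun rs hrs ↦ ?_
    simp only [Set.mem_prod, Finset.coe_range, Set.mem_Iio] at hrs
    exact hrs.1.trans_le hx
  · intro rs hrs rs' hrs' h
    simp only [Set.mem_prod, Finset.coe_range, Set.mem_Iio] at hrs hrs'
    refine Prod.swap_injective (injOn_mul_add_mul_of_coprime hxy.symm (hrs.2.trans_le hy)
      (hrs'.2.trans_le hy) ?_)
    simpa [add_comm] using h

lemma card_grid_mul_le_of_sum_eval_mul_pow_eq_zero [CharZero R] {L M D x y : ℕ} {α β : R}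
    (hα : Function.Injective (α ^ · : ℕ → R)) (hβ : β ≠ 0) (hxy : x.Coprime y)
    (hM : M ≤ max x y) {P : Fin L → R[X]} (hP : P ≠ 0) (hD : ∀ l, (P l).natDegree ≤ D)
    (hzero : ∀ r < L + M, ∀ s < M,
      ∑ l, (P l).eval ((r * y + s * x : ℕ) : R) * (α ^ r * β ^ s) ^ (l : ℕ) = 0) :
    M * M ≤ L * D := by
  classical
  have hα0 : α ≠ 0 := fun h ↦ by simpa using @hα 1 2 (by simp [h])
  let S : Finset R := (Finset.range M ×ˢ Finset.range M).image
    fun rs ↦ ((rs.1 * y + rs.2 * x : ℕ) : R)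
  have hS : S.card = M * M := by
    have hinj := (Nat.cast_injective (R := R)).comp_injOn (injOn_mul_add_mul_of_le hxy hM)
    rw [← Finset.coe_product] at hinj
    exact (Finset.card_image_of_injOn hinj).trans (by rw [Finset.card_product, Finset.card_range])
  rw [← hS, ← Fintype.card_fin L]
  refine card_le_card_mul_of_sum_eval_mul_pow_eq_zero hP hD (a := fun l : Fin L ↦ α ^ (l : ℕ))
    (hα.comp Fin.val_injective) (fun i ↦ i * y) fun ξ hξ ↦ ?_
  simp only [S, Finset.mem_image, Finset.mem_product, Finset.mem_range] at hξ
  obtain ⟨⟨r, s⟩, ⟨hr, hs⟩, rfl⟩ := hξ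
  have hη : α ^ r * β ^ s ≠ 0 := mul_ne_zero (pow_ne_zero _ hα0) (pow_ne_zero _ hβ)
  refine ⟨fun l ↦ (α ^ r * β ^ s) ^ (l : ℕ), fun l ↦ pow_ne_zero _ hη, fun i hi ↦ ?_⟩
  rw [Fintype.card_fin] at hi
  rw [← hzero (r + i) (by omega) s hs]
  refine Finset.sum_congr rfl fun l _ ↦ ?_
  push_cast
  ring_nf

end ZeroEstimate

section CommonRoot

lemma exists_mul_eq_mul_add_one_of_coprime {x y : ℕ} (hx : 0 < x) (hy : 0 < y)
    (hxy : x.Coprime y) : ∃ i j, i * y = j * x + 1 := by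
  obtain rfl | hx := Nat.eq_or_lt_of_le hx
  · exact ⟨1, y - 1, by omega⟩
  · obtain ⟨i, -, hi⟩ := Nat.exists_mul_mod_eq_one_of_coprime hxy.symm hx
    exact ⟨i, y * i / x, by rw [← hi, Nat.div_add_mod', mul_comm i]⟩

lemma exists_pow_mul_pow_pow_eq_of_pow_eq_pow {G : Type*} [CommMonoid G] {a b : G} {x y N : ℕ}
    (hx : 0 < x) (hy : 0 < y) (hxy : x.Coprime y) (hN : N ≠ 0) (hab : a ^ x = b ^ y)
    (hb : b ^ N = 1) : ∃ i j, (a ^ i * b ^ j) ^ y = a ∧ (a ^ i * b ^ j) ^ x = b := by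
  obtain ⟨i, j, hij⟩ := exists_mul_eq_mul_add_one_of_coprime hx hy hxy
  obtain ⟨N, rfl⟩ := Nat.exists_eq_succ_of_ne_zero hN
  refine ⟨i, j * N, ?_, ?_⟩
  · calc (a ^ i * b ^ (j * N)) ^ y = a * (a ^ x) ^ j * b ^ (j * N * y) := by
          rw [mul_pow, ← pow_mul, hij, pow_succ', ← pow_mul, ← pow_mul, mul_comm j x]
      _ = a * (b ^ (N + 1)) ^ (j * y) := by
          rw [hab, mul_assoc, ← pow_mul, ← pow_mul, ← pow_add]
          ring_nf
      _ = a := by rw [hb, one_pow, mul_one]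
  · calc (a ^ i * b ^ (j * N)) ^ x = (a ^ x) ^ i * b ^ (j * N * x) := by
          rw [mul_pow, ← pow_mul, ← pow_mul, ← pow_mul, mul_comm i x]
      _ = b ^ (i * y + j * N * x) := by rw [hab, ← pow_mul, ← pow_add, mul_comm y i]
      _ = b * (b ^ (N + 1)) ^ (j * x) := by
          rw [hij, ← pow_mul, ← pow_succ']
          ring_nf
      _ = b := by rw [hb, one_pow, mul_one]

lemma exists_pow_dvd_pow_sub_of_pow_dvd_pow_sub_pow {u : ℕ} (hu : u ≠ 0) {x y T : ℕ} (hx : 0 < x)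
    (hy : 0 < y) (hxy : x.Coprime y) {α β : ℤ} (hα : (u : ℤ) ∣ α - 1) (hβ : (u : ℤ) ∣ β - 1)
    (h : (u : ℤ) ^ T ∣ α ^ x - β ^ y) :
    ∃ γ : ℤ, (u : ℤ) ∣ γ - 1 ∧ (u : ℤ) ^ T ∣ γ ^ y - α ∧ (u : ℤ) ^ T ∣ γ ^ x - β := by
  have hdvd (a b : ℤ) : (u : ℤ) ^ T ∣ a - b ↔ (a : ZMod (u ^ T)) = b := by
    rw [eq_comm, ZMod.intCast_eq_intCast_iff_dvd_sub, Nat.cast_pow]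
  have hβT : (u : ℤ) ^ T ∣ β ^ u ^ T - 1 := by
    simpa using (pow_dvd_pow _ T.le_succ).trans (dvd_sub_pow_of_dvd_sub hβ T)
  simp only [hdvd, Int.cast_pow, Int.cast_one] at h hβT ⊢
  obtain ⟨i, j, hα', hβ'⟩ :=
    exists_pow_mul_pow_pow_eq_of_pow_eq_pow hx hy hxy (pow_ne_zero T hu) h hβT
  refine ⟨α ^ i * β ^ j, ?_, by exact_mod_cast hα', by exact_mod_cast hβ'⟩
  rw [← Int.modEq_iff_dvd, Int.modEq_comm] at hα hβ ⊢
  simpa using (hα.pow i).mul (hβ.pow j)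

end CommonRoot

section Interpolation

open Polynomial

lemma abs_eval_le_of_abs_coeff_le {R : Type*} [CommRing R] [LinearOrder R] [IsStrictOrderedRing R]
    {P : R[X]} {K : ℕ} (hP : P.natDegree < K) {B X ξ : R} (hB : ∀ k, |P.coeff k| ≤ B)
    (hX : 1 ≤ X) (hξ : |ξ| ≤ X) : |P.eval ξ| ≤ K * (B * X ^ (K - 1)) := by
  have hB0 : 0 ≤ B := (abs_nonneg _).trans (hB 0)
  calc |P.eval ξ| ≤ ∑ k ∈ Finset.range K, |P.coeff k * ξ ^ k| := by
        rw [eval_eq_sum_range' hP]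
        exact Finset.abs_sum_le_sum_abs _ _
    _ ≤ ∑ _k ∈ Finset.range K, B * X ^ (K - 1) := by
        refine Finset.sum_le_sum fun k hk ↦ ?_
        rw [abs_mul, abs_pow]
        gcongr
        · exact hB k
        · exact (pow_le_pow_left₀ (abs_nonneg ξ) hξ k).trans
            (pow_le_pow_right₀ hX (Nat.le_sub_one_of_lt (Finset.mem_range.mp hk)))
    _ = K * (B * X ^ (K - 1)) := by simp

lemma abs_sum_eval_mul_pow_le {R : Type*} [CommRing R] [LinearOrder R] [IsStrictOrderedRing R]
    {K L : ℕ} {P : Fin L → R[X]} (hP : ∀ l, (P l).natDegree < K) {B X H ξ η : R}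
    (hB : ∀ l k, |(P l).coeff k| ≤ B) (hX : 1 ≤ X) (hξ : |ξ| ≤ X) (hH : 1 ≤ H) (hη : |η| ≤ H) :
    |∑ l, (P l).eval ξ * η ^ (l : ℕ)| ≤ L * K * B * X ^ (K - 1) * H ^ (L - 1) := by
  calc |∑ l, (P l).eval ξ * η ^ (l : ℕ)| ≤ ∑ l, |(P l).eval ξ * η ^ (l : ℕ)| :=
        Finset.abs_sum_le_sum_abs _ _
    _ ≤ ∑ _l : Fin L, K * (B * X ^ (K - 1)) * H ^ (L - 1) := by
        refine Finset.sum_le_sum fun l _ ↦ ?_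
        rw [abs_mul, abs_pow]
        have heval := abs_eval_le_of_abs_coeff_le (hP l) (hB l) hX hξ
        refine mul_le_mul heval ?_ (by positivity) ((abs_nonneg _).trans heval)
        exact (pow_le_pow_left₀ (abs_nonneg η) hη l).trans
          (pow_le_pow_right₀ hH (Nat.le_sub_one_of_lt l.2))
    _ = L * K * B * X ^ (K - 1) * H ^ (L - 1) := by
        rw [Finset.sum_const, Finset.card_univ, Fintype.card_fin, nsmul_eq_mul]
        ring

lemma dvd_sum_eval_mul_pow_of_dvd_pow_sub {m α β γ : ℤ} {x y L : ℕ} (hα : m ∣ γ ^ y - α)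
    (hβ : m ∣ γ ^ x - β) {P : Fin L → ℤ[X]} (r s : ℕ)
    (h : m ∣ ∑ l, (P l).eval ((r * y + s * x : ℕ) : ℤ) * γ ^ ((l : ℕ) * (r * y + s * x))) :
    m ∣ ∑ l, (P l).eval ((r * y + s * x : ℕ) : ℤ) * (α ^ r * β ^ s) ^ (l : ℕ) := by
  have hη : γ ^ (r * y + s * x) ≡ α ^ r * β ^ s [ZMOD m] := by
    rw [pow_add, mul_comm r, mul_comm s, pow_mul, pow_mul]
    exact ((Int.modEq_iff_dvd.mpr hα).symm.pow r).mul ((Int.modEq_iff_dvd.mpr hβ).symm.pow s)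
  refine (dvd_iff_dvd_of_dvd_sub ?_).mp h
  rw [← Finset.sum_sub_distrib]
  refine Finset.dvd_sum fun l _ ↦ ?_
  rw [← mul_sub, mul_comm (l : ℕ), pow_mul]
  exact (hη.pow l).symm.dvd.mul_left _

theorem not_pow_dvd_pow_sub_pow {u x y K L M T e X H : ℕ} {α β : ℤ} (hu : 2 ≤ u)
    (hx : 0 < x) (hy : 0 < y) (hxy : x.Coprime y) (hα : (u : ℤ) ∣ α - 1) (hβ : (u : ℤ) ∣ β - 1)
    (hα2 : 2 ≤ |α|) (hβ0 : β ≠ 0) (hSiegel : T * (T + K) < e * (K * L))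
    (hM : M ≤ max x y) (hzeros : L * (K - 1) < M * M) (hX : (L + M) * y + M * x ≤ X)
    (hH : |α| ^ (L + M) * |β| ^ M ≤ H)
    (hsize : L * K * u ^ e * X ^ (K - 1) * H ^ (L - 1) < u ^ T) :
    ¬ (u : ℤ) ^ T ∣ α ^ x - β ^ y := by
  intro h
  obtain ⟨γ, hγ, hγα, hγβ⟩ :=
    exists_pow_dvd_pow_sub_of_pow_dvd_pow_sub_pow (by omega) hx hy hxy hα hβ h
  obtain ⟨P, hP0, hPdeg, hPcoeff, hPdvd⟩ :=
    exists_polynomials_pow_dvd_sum_eval_mul_pow hu hγ hSiegel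
  have hM0 : 0 < M := Nat.pos_of_mul_pos_left (Nat.zero_lt_of_lt hzeros)
  have hαinj : Function.Injective (α ^ · : ℕ → ℤ) :=
    Int.pow_right_injective (by rw [Int.abs_eq_natAbs] at hα2; omega)
  have hX1 : 1 ≤ X := le_trans (by nlinarith [Nat.zero_le L]) hX
  have hα1 : 1 ≤ |α| := by omega
  have hβ1 : 1 ≤ |β| := Int.one_le_abs hβ0
  refine hzeros.not_ge (card_grid_mul_le_of_sum_eval_mul_pow_eq_zero hαinj hβ0 hxy hM hP0
    (fun l ↦ Nat.le_sub_one_of_lt (hPdeg l)) fun r hr s hs ↦ ?_)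
  have hξ : r * y + s * x ≤ X :=
    (add_le_add (Nat.mul_le_mul_right y hr.le) (Nat.mul_le_mul_right x hs.le)).trans hX
  have hη : |α ^ r * β ^ s| ≤ H := by
    rw [abs_mul, abs_pow, abs_pow]
    exact le_trans (by gcongr) hH
  have hH1 : (1 : ℤ) ≤ H := le_trans (one_le_mul_of_one_le_of_one_le (one_le_pow₀ hα1)
    (one_le_pow₀ hβ1)) hH
  refine Int.eq_zero_of_abs_lt_dvd (m := (u : ℤ) ^ T)
    (dvd_sum_eval_mul_pow_of_dvd_pow_sub hγα hγβ r s (hPdvd _)) ?_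
  exact (abs_sum_eval_mul_pow_le (X := X) hPdeg hPcoeff (by exact_mod_cast hX1)
    (by exact_mod_cast hξ) hH1 hη).trans_lt (by exact_mod_cast hsize)

end Interpolation

section ExponentBound

variable {u x y z : ℕ} {α β : ℤ}

-- For `K = 576L` and `T = 288L²` the box principle needs coefficients just over `u^(T/2)` in size,
-- and `L = 9(q + 1)` makes the other factors in the estimate for the values smaller than `u^(T/2)`.
lemma not_pow_dvd_pow_sub_pow_of_sq_le_pow {q L : ℕ} (hu : 2 ≤ u) (hx : 0 < x) (hy : 0 < y)
    (hxy : x.Coprime y) (hα : (u : ℤ) ∣ α - 1) (hβ : (u : ℤ) ∣ β - 1) (hα2 : 2 ≤ |α|)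
    (hβ0 : β ≠ 0) (hαu : |α| ≤ u ^ 2) (hαβ : |α| * |β| ≤ u ^ 3) (hxz : x ≤ z) (hyz : y ≤ z)
    (hL : L = 9 * (q + 1)) (hM : 24 * L ≤ max x y) (hLz : 576 * L ^ 2 ≤ z) (hzq : z ^ 2 ≤ u ^ q) :
    ¬ (u : ℤ) ^ (288 * L ^ 2) ∣ α ^ x - β ^ y := by
  have hL0 : 0 < L := by omega
  have hX : (L + 24 * L) * y + 24 * L * x ≤ z ^ 2 :=
    calc (L + 24 * L) * y + 24 * L * x ≤ (L + 24 * L) * z + 24 * L * z := by gcongr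
      _ = 49 * L * z := by ring
      _ ≤ z ^ 2 := by rw [sq]; gcongr; nlinarith
  have hH : |α| ^ (L + 24 * L) * |β| ^ (24 * L) ≤ (u ^ (74 * L) : ℕ) :=
    calc |α| ^ (L + 24 * L) * |β| ^ (24 * L) = |α| ^ L * (|α| * |β|) ^ (24 * L) := by
          rw [mul_pow, pow_add, mul_assoc]
      _ ≤ ((u : ℤ) ^ 2) ^ L * ((u : ℤ) ^ 3) ^ (24 * L) := by gcongr
      _ = (u ^ (74 * L) : ℕ) := by
          push_cast
          ring
  have hsize : L * (576 * L) * u ^ (144 * L ^ 2 + 288 * L + 1) * (z ^ 2) ^ (576 * L - 1) *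
      (u ^ (74 * L)) ^ (L - 1) < u ^ (288 * L ^ 2) :=
    calc _ ≤ u ^ q * u ^ (144 * L ^ 2 + 288 * L + 1) * (u ^ q) ^ (576 * L - 1) *
          (u ^ (74 * L)) ^ L := by
          gcongr
          · nlinarith
          · exact Nat.one_le_pow _ _ (by omega)
          · omega
      _ = u ^ (144 * L ^ 2 + 288 * L + 1 + q * (576 * L) + 74 * L * L) := by
          rw [mul_right_comm (u ^ q), ← pow_succ', Nat.sub_add_cancel (by omega)]
          ring
      _ < u ^ (288 * L ^ 2) := Nat.pow_lt_pow_right hu (by subst hL; nlinarith)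
  exact not_pow_dvd_pow_sub_pow hu hx hy hxy hα hβ hα2 hβ0 (K := 576 * L)
    (by nlinarith [pow_pos hL0 2]) hM
    (by rw [Nat.mul_sub]; have := Nat.mul_pos hL0 hL0; ring_nf; ring_nf at this; omega) hX hH hsize

lemma sq_mul_sq_le_pow_pred {u q : ℕ} (hu : 175 ≤ u) (hq : 7 ≤ q) :
    (46656 * (q + 1) ^ 2) ^ 2 ≤ u ^ (q - 1) := by
  refine le_trans ?_ (Nat.pow_le_pow_left hu (q - 1))
  induction q, hq using Nat.le_induction with
  | base => norm_num
  | succ q hq ih =>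
    calc (46656 * (q + 1 + 1) ^ 2) ^ 2 ≤ 175 * (46656 * (q + 1) ^ 2) ^ 2 := by
          have : q + 1 + 1 ≤ 2 * (q + 1) := by omega
          calc _ ≤ (46656 * (2 * (q + 1)) ^ 2) ^ 2 := by gcongr
            _ ≤ _ := by nlinarith [sq_nonneg ((46656 * (q + 1) ^ 2))]
      _ ≤ 175 * 175 ^ (q - 1) := by gcongr
      _ = 175 ^ (q + 1 - 1) := by rw [← pow_succ']; congr 1; omega

theorem lt_of_pow_half_dvd_pow_sub_pow (hu : 175 ≤ u) (hx : 0 < x) (hy : 0 < y)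
    (hxy : x.Coprime y) (hα : (u : ℤ) ∣ α - 1) (hβ : (u : ℤ) ∣ β - 1) (hα2 : 2 ≤ |α|)
    (hβ0 : β ≠ 0) (hαu : |α| ≤ u ^ 2) (hαβ : |α| * |β| ≤ u ^ 3) (hxz : x ≤ z) (hyz : y ≤ z)
    (hz : z ≤ 2 * max x y) (h : (u : ℤ) ^ (z / 2) ∣ α ^ x - β ^ y) : z < 46656 * 7 ^ 2 := by
  by_contra! hlarge
  let q := Nat.clog u (z ^ 2)
  have hzq : z ^ 2 ≤ u ^ q := Nat.le_pow_clog (by omega) _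
  have hqz : 46656 * (q + 1) ^ 2 ≤ z := by
    rcases le_or_gt q 6 with hq | hq
    · exact le_trans (by gcongr; omega) hlarge
    · have hqz : (46656 * (q + 1) ^ 2) ^ 2 < z ^ 2 := (sq_mul_sq_le_pow_pred hu hq).trans_lt
        (Nat.pow_pred_clog_lt_self (by omega) (by nlinarith))
      exact (lt_of_pow_lt_pow_left₀ 2 z.zero_le hqz).le
  have hLz : 576 * (9 * (q + 1)) ^ 2 ≤ z := by linarith
  have hqq : q + 1 ≤ (q + 1) ^ 2 := Nat.le_self_pow two_ne_zero _
  exact not_pow_dvd_pow_sub_pow_of_sq_le_pow (by omega) hx hy hxy hα hβ hα2 hβ0 hαu hαβ hxz hyz rfl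
    (by omega) hLz hzq ((pow_dvd_pow _ (by omega)).trans h)

end ExponentBound

section BinomialCongruences

lemma pow_dvd_one_add_pow_sub_sum_choose {R : Type*} [CommRing R] (w : R) (N k : ℕ) :
    w ^ k ∣ (1 + w) ^ N - ∑ j ∈ Finset.range k, (N.choose j : R) * w ^ j := by
  have expand : (1 + w) ^ N = ∑ j ∈ Finset.range (k + (N + 1)), (N.choose j : R) * w ^ j := by
    rw [add_comm 1 w, add_pow]
    simp only [one_pow, mul_one, mul_comm]
    refine Finset.sum_subset (by grind) fun j _ hj ↦ ?_
    rw [Nat.choose_eq_zero_of_lt (by simpa using hj), Nat.cast_zero, mul_zero]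
  rw [expand, Finset.sum_range_add, add_sub_cancel_left]
  exact Finset.dvd_sum fun j _ ↦ (pow_dvd_pow w (Nat.le_add_right k j)).mul_left _

lemma dvd_sub_of_mul_dvd_one_add_mul_pow_sub {R : Type*} [CommRing R] [IsDomain R] {m u a b : R}
    {x y : ℕ} (hu : u ≠ 0) (hmu : m ∣ u)
    (h : u * m ∣ (1 + b * u) ^ y - (1 + a * u) ^ x) : m ∣ b * y - a * x := by
  have linear (c : R) (N : ℕ) : u * m ∣ (1 + c * u) ^ N - (1 + N * (c * u)) := by
    have := pow_dvd_one_add_pow_sub_sum_choose (c * u) N 2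
    simp only [Finset.sum_range_succ, Finset.sum_range_zero, zero_add, Nat.choose_zero_right,
      Nat.choose_one_right, Nat.cast_one, pow_zero, pow_one, mul_one] at this
    exact ((mul_dvd_mul_left u hmu).trans ⟨c ^ 2, by ring⟩).trans this
  refine (mul_dvd_mul_iff_left hu).mp ?_
  convert (dvd_add h (linear a x)).sub (linear b y) using 1
  ring

lemma dvd_choose_of_mod_lt {p N k : ℕ} (hp : p.Prime) (hk : k < p) (hN : N % p < k) :
    p ∣ N.choose k := by
  have : Fact p.Prime := ⟨hp⟩
  have lucas := Choose.choose_modEq_choose_mod_mul_choose_div_nat (n := N) (k := k) (p := p)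
  rw [Nat.mod_eq_of_lt hk, Nat.choose_eq_zero_of_lt hN, zero_mul] at lucas
  exact (Nat.modEq_zero_iff_dvd).mp lucas

lemma one_add_mul_pow_modEq_of_dvd_choose {d u : ℤ} {N : ℕ} (hu : d ∣ u)
    (hN : d ∣ N.choose 4) (c : ℤ) :
    (1 + c * u) ^ N ≡ 1 + N * (c * u) + N.choose 2 * (c * u) ^ 2 + N.choose 3 * (c * u) ^ 3
      [ZMOD d * u ^ 4] := by
  have quartic : d * u ^ 4 ∣
      (1 + c * u) ^ N - ∑ j ∈ Finset.range 5, (N.choose j : ℤ) * (c * u) ^ j :=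
    ((mul_dvd_mul_right hu (u ^ 4)).trans ⟨c ^ 5, by ring⟩).trans
      (pow_dvd_one_add_pow_sub_sum_choose _ N 5)
  have last : d * u ^ 4 ∣ N.choose 4 * (c * u) ^ 4 := by
    rw [mul_pow]
    exact mul_dvd_mul hN (dvd_mul_left _ _)
  simp only [Finset.sum_range_succ, Finset.sum_range_zero, zero_add, Nat.choose_zero_right,
    Nat.choose_one_right, Nat.cast_one, pow_zero, pow_one, mul_one] at quartic
  rw [Int.modEq_comm, Int.modEq_iff_dvd]
  simpa only [sub_add, add_sub_cancel_right] using dvd_add quartic last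

lemma six_mul_cubic_truncation (N : ℕ) (w : ℤ) :
    6 * (1 + N * w + N.choose 2 * w ^ 2 + N.choose 3 * w ^ 3) =
      6 + 6 * N * w + 3 * (N * (N - 1)) * w ^ 2 + N * (N - 1) * (N - 2) * w ^ 3 := by
  have factorial_mul_choose (k : ℕ) :
      (k.factorial : ℤ) * N.choose k = (descPochhammer ℤ k).eval (N : ℤ) := by
    rw [descPochhammer_eval_eq_descFactorial, Nat.descFactorial_eq_factorial_mul_choose,
      Nat.cast_mul]
  have two_mul_choose : 2 * (N.choose 2 : ℤ) = N * (N - 1) := by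
    simpa [descPochhammer_succ_right, Nat.factorial] using factorial_mul_choose 2
  have six_mul_choose : 6 * (N.choose 3 : ℤ) = N * (N - 1) * (N - 2) := by
    simpa [descPochhammer_succ_right, Nat.factorial] using factorial_mul_choose 3
  linear_combination 3 * w ^ 2 * two_mul_choose + w ^ 3 * six_mul_choose

-- `(15u + 30) / (36u - 12)` is the `[1/1]` Padé approximant of `log (1 - 5u) / log (1 + 2u)`.
lemma one_add_two_mul_pow_modEq_one_sub_five_mul_pow {u : ℕ} (hu0 : 0 < u) (hu : 35 ∣ u) :
    (1 + 2 * (u : ℤ)) ^ (15 * u + 30) ≡ (1 + -5 * (u : ℤ)) ^ (36 * u - 12) [ZMOD 35 * u ^ 4] := by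
  have choose_four (N : ℕ) (h5 : N % 5 < 4) (h7 : N % 7 < 4) : (35 : ℤ) ∣ N.choose 4 := by
    exact_mod_cast Nat.Coprime.mul_dvd_of_dvd_of_dvd (by norm_num : Nat.Coprime 5 7)
      (dvd_choose_of_mod_lt (by norm_num) (by norm_num) h5)
      (dvd_choose_of_mod_lt (by norm_num) (by norm_num) h7)
  have hu' : (35 : ℤ) ∣ u := by exact_mod_cast hu
  have hβ := one_add_mul_pow_modEq_of_dvd_choose hu'
    (choose_four (15 * u + 30) (by omega) (by omega)) 2
  have hα := one_add_mul_pow_modEq_of_dvd_choose hu'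
    (choose_four (36 * u - 12) (by omega) (by omega)) (-5)
  refine hβ.trans (Int.ModEq.trans ?_ hα.symm)
  rw [Int.modEq_comm, Int.modEq_iff_dvd]
  refine ⟨11834 - 29340 * u + 27900 * u ^ 2, mul_left_cancel₀ (show (6 : ℤ) ≠ 0 by norm_num) ?_⟩
  rw [mul_sub, six_mul_cubic_truncation, six_mul_cubic_truncation, Nat.cast_sub (by omega)]
  push_cast
  ring

end BinomialCongruences

section ExponentDivisibility

lemma dvd_mul_of_dvd_one_add_pow_sub_one {M w e : ℕ} (hM : Odd M)
    (hMw : ∀ p : ℕ, p.Prime → p ∣ M → p ∣ w) (h : M ∣ (1 + w) ^ e - 1) : M ∣ w * e := by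
  rw [Nat.dvd_iff_prime_pow_dvd_dvd]
  rintro p (_ | j) hp hj
  · simp
  have hpM : p ∣ M := (dvd_pow_self p j.succ_ne_zero).trans hj
  have hpw : p ∣ w := hMw p hp hpM
  have hp1 : ¬ p ∣ 1 + w := by simpa [Nat.dvd_add_left hpw] using hp.ne_one
  have lte := Nat.emultiplicity_pow_sub_pow hp (hM.of_dvd_nat hpM) (x := 1 + w) (y := 1)
    (by simpa using hpw) hp1 e
  rw [one_pow, Nat.add_sub_cancel_left, ← emultiplicity_mul hp.prime] at lte
  rw [pow_dvd_iff_le_emultiplicity, ← lte]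
  exact le_emultiplicity_of_pow_dvd (hj.trans h)

lemma dvd_mul_sub_of_one_add_pow_modEq {M w i j : ℕ} (hM : Odd M)
    (hMw : ∀ p : ℕ, p.Prime → p ∣ M → p ∣ w)
    (h : (1 + w : ℤ) ^ i ≡ (1 + w : ℤ) ^ j [ZMOD M]) : (M : ℤ) ∣ w * (i - j) := by
  wlog hij : j ≤ i generalizing i j
  · rw [← dvd_neg, ← mul_neg, neg_sub]
    exact this h.symm (by omega)
  obtain ⟨e, rfl⟩ := Nat.exists_eq_add_of_le hij
  have hcop : M.Coprime ((1 + w) ^ j) := by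
    refine Nat.Coprime.pow_right _ (Nat.coprime_of_dvd fun p hp hpM hp1 ↦ ?_)
    exact hp.one_lt.ne' (Nat.dvd_one.mp ((Nat.dvd_add_left (hMw p hp hpM)).mp hp1))
  have hdvd : (M : ℤ) ∣ ((1 + w) ^ j * ((1 + w) ^ e - 1) : ℕ) := by
    push_cast [Nat.one_le_pow _ _ (show 0 < 1 + w by omega)]
    rw [mul_sub, ← pow_add, mul_one]
    exact h.symm.dvd
  have := dvd_mul_of_dvd_one_add_pow_sub_one hM hMw
    (hcop.dvd_of_dvd_mul_left (by exact_mod_cast hdvd))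
  simpa using (Int.natCast_dvd_natCast.mpr this)

lemma le_mul_of_pow_modEq_pow {M u a b c x y z : ℕ} {α : ℤ} (hu : 0 < u) (hM : Odd M)
    (hMu : ∀ p : ℕ, p.Prime → p ∣ M → p ∣ u) (hxy : (1 + 2 * u : ℤ) ^ y ≡ α ^ x [ZMOD M])
    (hab : (1 + 2 * u : ℤ) ^ a ≡ α ^ b [ZMOD M]) (ha : Odd a) (hb : Even b) (hx : Odd x)
    (hac : a ≤ c) (hbc : b ≤ c) (hxz : x ≤ z) (hyz : y ≤ z) : M ≤ u * (c * z) := by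
  have hpow : (1 + (2 * u : ℕ) : ℤ) ^ (y * b) ≡ (1 + (2 * u : ℕ) : ℤ) ^ (a * x) [ZMOD M] := by
    push_cast
    calc (1 + 2 * u : ℤ) ^ (y * b) ≡ α ^ (x * b) [ZMOD M] := by
          simpa only [pow_mul] using hxy.pow b
      _ ≡ (1 + 2 * u : ℤ) ^ (a * x) [ZMOD M] := by
          simpa only [pow_mul, mul_comm x b] using (hab.pow x).symm
  have hdvd := dvd_mul_sub_of_one_add_pow_modEq hM (fun p hp h ↦ (hMu p hp h).mul_left 2) hpow
  rw [Nat.cast_mul, mul_assoc] at hdvd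
  have hM2 : IsCoprime (M : ℤ) (2 : ℕ) := Nat.isCoprime_iff_coprime.mpr hM.coprime_two_right
  replace hdvd := hM2.dvd_of_dvd_mul_left hdvd
  have hne : y * b ≠ a * x := fun h ↦
    Nat.not_even_iff_odd.mpr (ha.mul hx) (h ▸ hb.mul_left y)
  have hyb : y * b ≤ c * z := by rw [mul_comm c]; gcongr
  have hax : a * x ≤ c * z := by gcongr
  have hlt : |((y * b : ℕ) : ℤ) - (a * x : ℕ)| ≤ (c * z : ℕ) :=
    abs_sub_le_of_nonneg_of_le (by positivity) (by exact_mod_cast hyb) (by positivity)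
      (by exact_mod_cast hax)
  have hle : (M : ℤ) ≤ |u * (((y * b : ℕ) : ℤ) - (a * x : ℕ))| :=
    Int.le_of_dvd (abs_pos.mpr (mul_ne_zero (by exact_mod_cast hu.ne')
      (sub_ne_zero.mpr (by exact_mod_cast hne)))) ((dvd_abs _ _).mpr hdvd)
  rw [abs_mul, Nat.abs_cast] at hle
  exact_mod_cast hle.trans (mul_le_mul_of_nonneg_left hlt (Nat.cast_nonneg u))

end ExponentDivisibility

section ExponentialEquation

lemma lt_of_pow_add_eq_pow {A C Y x z : ℕ} (hC : 1 < C) (hCA : C ≤ A) (hY : 0 < Y)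
    (h : A ^ x + Y = C ^ z) : x < z :=
  (Nat.pow_lt_pow_iff_right hC).mp <| (Nat.pow_le_pow_left hCA x).trans_lt (by omega)

lemma le_mul_max_of_pow_add_pow_eq_pow {A B C k x y z : ℕ} (hA : 0 < A) (hB : 0 < B) (hC : 1 < C)
    (hAB : A + B = C ^ k) (hx : 0 < x) (h : A ^ x + B ^ y = C ^ z) : z ≤ k * max x y := by
  rw [← Nat.pow_le_pow_iff_right hC, ← h, pow_mul, ← hAB]
  calc A ^ x + B ^ y ≤ A ^ max x y + B ^ max x y := by
        gcongr
        exacts [le_max_left x y, le_max_right x y]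
    _ ≤ (A + B) ^ max x y :=
        pow_add_pow_le A.zero_le B.zero_le (by omega)

lemma mul_lt_pow_self_of_three_le {p c : ℕ} (hp : 3 ≤ p) (hc : 2 ≤ c) : p * c < c ^ p := by
  induction p, hp using Nat.le_induction with
  | base => nlinarith [Nat.mul_le_mul hc hc]
  | succ p hp ih =>
    calc (p + 1) * c ≤ p * c * c := by nlinarith [Nat.mul_le_mul (Nat.zero_le p) hc]
      _ < c ^ (p + 1) := by rw [pow_succ]; gcongr

lemma eq_one_of_forall_prime_dvd_pow_add_pow {a b p : ℕ} (ha : 2 ≤ a) (hb : 2 ≤ b) (hp : Odd p)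
    (h : ∀ q : ℕ, q.Prime → q ∣ a ^ p + b ^ p → Odd q ∧ q ∣ a + b ∧ ¬ q ∣ a) : p = 1 := by
  by_contra hp1
  have hp3 : 3 ≤ p := by grind
  obtain ⟨S, hS⟩ : a + b ∣ a ^ p + b ^ p := hp.nat_add_dvd_pow_add_pow a b
  have hSp : S ∣ p := by
    rw [Nat.dvd_iff_prime_pow_dvd_dvd]
    rintro q (_ | j) hq hj
    · simp
    have hqS : q ∣ S := (dvd_pow_self q j.succ_ne_zero).trans hj
    obtain ⟨hq2, hqab, hqa⟩ := h q hq (hS ▸ hqS.mul_left _)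
    have lte := Nat.emultiplicity_pow_add_pow hq hq2 hqab hqa hp
    rw [hS, emultiplicity_mul hq.prime] at lte
    have hfin : emultiplicity q (a + b) ≠ ⊤ := finiteMultiplicity_iff_emultiplicity_ne_top.mp
      (Nat.finiteMultiplicity_iff.mpr ⟨hq.ne_one, by omega⟩)
    rw [pow_dvd_iff_le_emultiplicity] at hj ⊢
    exact hj.trans_eq (ENat.add_right_injective_of_ne_top hfin lte)
  have hSle : (a + b) * S ≤ (a + b) * p := Nat.mul_le_mul_left _ (Nat.le_of_dvd hp.pos hSp)
  have := mul_lt_pow_self_of_three_le hp3 ha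
  have := mul_lt_pow_self_of_three_le hp3 hb
  linarith

lemma odd_of_dvd_add_one_of_dvd_pow_add_one {n a : ℤ} {x : ℕ} (hn : 2 < n) (ha : n ∣ a + 1)
    (hx : n ∣ a ^ x + 1) : Odd x := by
  by_contra hodd
  have hpow : a ^ x ≡ (-1) ^ x [ZMOD n] := by
    refine Int.ModEq.pow x (Int.ModEq.symm (Int.modEq_iff_dvd.mpr ?_))
    simpa using ha
  rw [(Nat.not_odd_iff_even.mp hodd).neg_one_pow] at hpow
  have htwo : n ∣ 2 := by
    simpa only [add_sub_sub_cancel, one_add_one_eq_two] using dvd_sub hx hpow.symm.dvd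
  exact hn.not_ge (Int.le_of_dvd two_pos htwo)

end ExponentialEquation

section Solutions

variable {n x y z : ℕ}

lemma intCast_pow_add_pow_eq (hn : 0 < n)
    (heq : (35 * n ^ 2 - 1) ^ x + (14 * n ^ 2 + 1) ^ y = (7 * n) ^ z) :
    (35 * (n : ℤ) ^ 2 - 1) ^ x + (14 * (n : ℤ) ^ 2 + 1) ^ y = (7 * n) ^ z := by
  have hcast : ((35 * n ^ 2 - 1 : ℕ) : ℤ) = 35 * (n : ℤ) ^ 2 - 1 := by
    rw [Nat.cast_sub (by nlinarith)]
    push_cast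
    rfl
  rw [← hcast]
  exact_mod_cast heq

lemma odd_of_pow_add_pow_eq (hn : 2 < n) (hz : z ≠ 0)
    (heq : (35 * n ^ 2 - 1) ^ x + (14 * n ^ 2 + 1) ^ y = (7 * n) ^ z) : Odd x := by
  refine odd_of_dvd_add_one_of_dvd_pow_add_one (n := n) (a := 35 * (n : ℤ) ^ 2 - 1)
    (by exact_mod_cast hn) ⟨35 * n, by ring⟩ ?_
  have hβ : (n : ℤ) ∣ 14 * (n : ℤ) ^ 2 + 1 - 1 := ⟨14 * n, by ring⟩
  have hB : (n : ℤ) ∣ (14 * (n : ℤ) ^ 2 + 1) ^ y - 1 := by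
    simpa only [one_pow] using hβ.trans (sub_dvd_pow_sub_pow _ 1 y)
  have hC : (n : ℤ) ∣ (7 * n) ^ z := (dvd_mul_left _ _).trans (dvd_pow_self _ hz)
  rw [← intCast_pow_add_pow_eq (by omega) heq] at hC
  have split (a b : ℤ) : a + 1 = a + b - (b - 1) := by ring
  exact split _ _ ▸ dvd_sub hC hB

/-- The equation `35n² - 1 = -(1 - 5u)`, `14n² + 1 = 1 + 2u`, where `u = 7n²`, turns into for odd
`x`: both bases on the left are now congruent to `1` modulo `u`. -/
def IsUnitPowerSolution (n x y z : ℕ) : Prop :=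
  (1 + 2 * (7 * n ^ 2 : ℕ) : ℤ) ^ y - (1 + -5 * (7 * n ^ 2 : ℕ) : ℤ) ^ x = (7 * n) ^ z

lemma isUnitPowerSolution_of_pow_add_pow_eq (hn : 0 < n) (hx : Odd x)
    (heq : (35 * n ^ 2 - 1) ^ x + (14 * n ^ 2 + 1) ^ y = (7 * n) ^ z) :
    IsUnitPowerSolution n x y z := by
  rw [IsUnitPowerSolution, ← intCast_pow_add_pow_eq hn heq, sub_eq_neg_add, ← hx.neg_pow]
  push_cast
  ring_nf

lemma coprime_of_pow_add_pow_eq (hn : Odd n) (hx : Odd x) (hy : 0 < y)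
    (heq : (35 * n ^ 2 - 1) ^ x + (14 * n ^ 2 + 1) ^ y = (7 * n) ^ z) : x.Coprime y := by
  obtain ⟨x', hx'⟩ := Nat.gcd_dvd_left x y
  obtain ⟨y', hy'⟩ := Nat.gcd_dvd_right x y
  have hg : Odd (x.gcd y) := hx.of_dvd_nat (Nat.gcd_dvd_left x y)
  have hx'odd : Odd x' := hx.of_dvd_nat (Dvd.intro_left _ hx'.symm)
  have hy'0 : y' ≠ 0 := by
    rintro rfl
    omega
  have hn2 : 0 < n ^ 2 := pow_pos hn.pos 2
  refine eq_one_of_forall_prime_dvd_pow_add_pow (a := (35 * n ^ 2 - 1) ^ x')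
    (b := (14 * n ^ 2 + 1) ^ y')
    (le_trans (by omega) (Nat.le_self_pow hx'odd.pos.ne' _))
    (le_trans (by omega) (Nat.le_self_pow hy'0 _)) hg fun q hq hqz ↦ ?_
  rw [← pow_mul, ← pow_mul, mul_comm x', mul_comm y', ← hx', ← hy', heq] at hqz
  have hqn : q ∣ 7 * n := hq.dvd_of_dvd_pow hqz
  have hqA : q ∣ (35 * n ^ 2 - 1) + 1 := by
    rw [Nat.sub_add_cancel (by omega)]
    exact hqn.trans ⟨5 * n, by ring⟩
  have hqB : q ∣ 14 * n ^ 2 + 1 - 1 := hqn.trans ⟨2 * n, by rw [Nat.add_sub_cancel]; ring⟩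
  have hqa : q ∣ (35 * n ^ 2 - 1) ^ x' + 1 := by
    simpa only [one_pow] using hqA.trans (hx'odd.nat_add_dvd_pow_add_pow _ 1)
  have hqb : q ∣ (14 * n ^ 2 + 1) ^ y' - 1 := by
    simpa only [one_pow] using hqB.trans (Nat.sub_dvd_pow_sub_pow _ 1 y')
  refine ⟨((by decide : Odd 7).mul hn).of_dvd_nat hqn, ?_, fun hqa' ↦ ?_⟩
  · have := Nat.one_le_pow y' (14 * n ^ 2 + 1) (by omega)
    simpa only [add_assoc, Nat.add_sub_cancel' this] using dvd_add hqa hqb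
  · exact hq.not_dvd_one ((Nat.dvd_add_right hqa').mp hqa)

lemma IsUnitPowerSolution.dvd_five_mul_add_two_mul {m : ℕ} (hn : 0 < n) (hm : m ∣ 7 * n ^ 2)
    (hmz : 7 * n ^ 2 * m ∣ (7 * n) ^ z) (h : IsUnitPowerSolution n x y z) :
    m ∣ 5 * x + 2 * y := by
  have hdvd : ((7 * n ^ 2 : ℕ) : ℤ) * m ∣
      (1 + 2 * (7 * n ^ 2 : ℕ) : ℤ) ^ y - (1 + -5 * (7 * n ^ 2 : ℕ) : ℤ) ^ x := by
    rw [h]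
    exact_mod_cast hmz
  have linear : (m : ℤ) ∣ 2 * y - -5 * x :=
    dvd_sub_of_mul_dvd_one_add_mul_pow_sub (by positivity) (by exact_mod_cast hm) hdvd
  rw [neg_mul, sub_neg_eq_add, add_comm] at linear
  exact_mod_cast linear

lemma IsUnitPowerSolution.odd_base (hn : 0 < n) (hx : Odd x) (hz : 3 ≤ z)
    (h : IsUnitPowerSolution n x y z) : Odd n := by
  have hdvd : 7 * n ∣ 5 * x + 2 * y := dvd_five_mul_add_two_mul hn ⟨n, by ring⟩
    (Dvd.dvd.trans ⟨7, by ring⟩ (pow_dvd_pow _ hz)) h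
  by_contra hodd
  have := (even_iff_two_dvd.mp (Nat.not_odd_iff_even.mp hodd)).trans ((dvd_mul_left n 7).trans hdvd)
  grind

lemma IsUnitPowerSolution.sq_lt_exponent (hn : 3 ≤ n) (hx : 0 < x) (hxz : x < z) (hyz : y < z)
    (hz : 3 ≤ z) (h : IsUnitPowerSolution n x y z) : n ^ 2 < z := by
  have hn0 : 0 < n := by omega
  have hdvd : 7 * n ∣ 5 * x + 2 * y := dvd_five_mul_add_two_mul hn0 ⟨n, by ring⟩
    (Dvd.dvd.trans ⟨7, by ring⟩ (pow_dvd_pow _ hz)) h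
  have hz4 : 4 ≤ z := by
    have := Nat.le_of_dvd (by omega) hdvd
    omega
  have hdvd' : 7 * n ^ 2 ∣ 5 * x + 2 * y := dvd_five_mul_add_two_mul hn0 dvd_rfl
    (Dvd.dvd.trans ⟨7 ^ 2, by ring⟩ (pow_dvd_pow _ hz4)) h
  have := Nat.le_of_dvd (by omega) hdvd'
  omega

theorem IsUnitPowerSolution.exponent_lt (hn : 5 ≤ n) (hx : 0 < x) (hy : 0 < y)
    (hxy : x.Coprime y) (hxz : x < z) (hyz : y < z) (hz : z ≤ 2 * max x y)
    (h : IsUnitPowerSolution n x y z) : z < 46656 * 7 ^ 2 := by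
  have hu : 175 ≤ 7 * n ^ 2 := by nlinarith
  have hdvd : 7 * n ^ 2 ∣ (7 * n) ^ 2 := ⟨7, by ring⟩
  rw [IsUnitPowerSolution] at h
  generalize 7 * n ^ 2 = u at *
  have huZ : (175 : ℤ) ≤ u := by exact_mod_cast hu
  have hα : |1 + -5 * (u : ℤ)| = 5 * u - 1 := by
    rw [abs_of_neg (by linarith)]
    ring
  have hβ : |1 + 2 * (u : ℤ)| = 1 + 2 * u := abs_of_pos (by linarith)
  refine lt_of_pow_half_dvd_pow_sub_pow (α := 1 + -5 * (u : ℤ)) (β := 1 + 2 * u) hu hx hy hxy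
    ⟨-5, by ring⟩ ⟨2, by ring⟩ (by linarith) (by linarith) (by nlinarith)
    (by rw [hα, hβ]; nlinarith [mul_nonneg (sub_nonneg.mpr huZ) (sq_nonneg (u : ℤ))])
    hxz.le hyz.le hz ?_
  rw [dvd_sub_comm, h]
  have hpow : u ^ (z / 2) ∣ (7 * n) ^ z :=
    (pow_dvd_pow_of_dvd hdvd (z / 2)).trans <| by
      rw [← pow_mul]
      exact pow_dvd_pow _ (Nat.mul_div_le z 2)
  exact_mod_cast hpow

lemma IsUnitPowerSolution.modEq_of_dvd {M : ℕ} (hM : M ∣ (7 * n) ^ z)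
    (h : IsUnitPowerSolution n x y z) :
    (1 + 2 * (7 * n ^ 2 : ℕ) : ℤ) ^ y ≡ (1 + -5 * (7 * n ^ 2 : ℕ) : ℤ) ^ x [ZMOD M] := by
  rw [Int.modEq_comm, Int.modEq_iff_dvd, h]
  exact_mod_cast hM

-- `(1634715, 1328164)` is a short vector of the lattice of exponents `(a, b)` for which
-- `351 ^ a ≡ (-874) ^ b` modulo `35 ^ 10`.
lemma pow_modEq_pow_of_thirtyfive_pow_ten :
    (1 + 2 * (175 : ℕ) : ℤ) ^ 1634715 ≡ (1 + -5 * (175 : ℕ)) ^ 1328164 [ZMOD (35 ^ 10 : ℕ)] := by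
  rw [show 35 ^ 10 = 2758547353515625 by norm_num, ← ZMod.intCast_eq_intCast_iff]
  simp only [Int.cast_pow, Int.cast_add, Int.cast_mul, Int.cast_neg, Int.cast_one, Int.cast_ofNat,
    Nat.cast_ofNat]
  reduce_mod_char

lemma IsUnitPowerSolution.ne_five (h : IsUnitPowerSolution n x y z) (hx : Odd x) (hxz : x ≤ z)
    (hyz : y ≤ z) (hz : 10 ≤ z) (hzlt : z < 46656 * 7 ^ 2) : n ≠ 5 := by
  rintro rfl
  have hprime (p : ℕ) (hp : p.Prime) (hpM : p ∣ 35 ^ 10) : p ∣ 7 * 5 ^ 2 :=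
    (hp.dvd_of_dvd_pow hpM).trans ⟨5, by norm_num⟩
  have hMle : 35 ^ 10 ≤ 7 * 5 ^ 2 * (1634715 * z) :=
    le_mul_of_pow_modEq_pow (by norm_num) (by decide) hprime (h.modEq_of_dvd (pow_dvd_pow _ hz))
      pow_modEq_pow_of_thirtyfive_pow_ten (by decide) (by decide) hx le_rfl (by norm_num) hxz hyz
  omega

lemma IsUnitPowerSolution.lt_fifteen (h : IsUnitPowerSolution n x y z) (hodd : Odd n) (h5 : 5 ∣ n)
    (hx : Odd x) (hxz : x ≤ z) (hyz : y ≤ z) (hz : 9 ≤ z) (hzlt : z < 46656 * 7 ^ 2) : n < 15 := by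
  by_contra! hn
  have hu : 1575 ≤ 7 * n ^ 2 := by nlinarith
  have huodd : Odd (7 * n ^ 2) := (by decide : Odd 7).mul hodd.pow
  have hu35 : 35 ∣ 7 * n ^ 2 := mul_dvd_mul_left 7 (h5.trans (dvd_pow_self n two_ne_zero))
  have hM : 35 * (7 * n ^ 2) ^ 4 ∣ (7 * n) ^ z := by
    obtain ⟨k, rfl⟩ := h5
    exact Dvd.dvd.trans ⟨7 ^ 4 * k, by ring⟩ (pow_dvd_pow _ hz)
  have hprime (p : ℕ) (hp : p.Prime) (hpM : p ∣ 35 * (7 * n ^ 2) ^ 4) : p ∣ 7 * n ^ 2 :=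
    (hp.dvd_mul.mp hpM).elim (·.trans hu35) hp.dvd_of_dvd_pow
  have hxy := h.modEq_of_dvd hM
  generalize 7 * n ^ 2 = u at *
  have hMle := le_mul_of_pow_modEq_pow (a := 15 * u + 30) (b := 36 * u - 12) (c := 36 * u)
    (by omega) ((by decide : Odd 35).mul huodd.pow) hprime hxy
    (by exact_mod_cast one_add_two_mul_pow_modEq_one_sub_five_mul_pow (by omega) hu35)
    (by grind) (by grind) hx (by omega) (by omega) hxz hyz
  have : 35 * u ^ 2 ≤ 36 * z := le_of_mul_le_mul_left (by linarith) (pow_pos (by omega : 0 < u) 2)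
  nlinarith

end Solutions

theorem stmt_16 (n : ℕ) (hn : 0 < n) (h5 : 5 ∣ n)
    (x y z : ℕ) (hx : 0 < x) (hy : 0 < y) (hz : 0 < z)
    (heq : (35 * n ^ 2 - 1) ^ x + (14 * n ^ 2 + 1) ^ y = (7 * n) ^ z) :
    x = 1 ∧ y = 1 ∧ z = 2 := by
  have hn5 : 5 ≤ n := Nat.le_of_dvd hn h5
  have hn2 : 0 < n ^ 2 := pow_pos hn 2
  have hAB : 35 * n ^ 2 - 1 + (14 * n ^ 2 + 1) = (7 * n) ^ 2 := by grind
  have hxz : x < z := lt_of_pow_add_eq_pow (by omega) (by nlinarith) (pow_pos (by omega) y) heq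
  have hyz : y < z := lt_of_pow_add_eq_pow (by omega) (by nlinarith)
    (pow_pos (by omega) x) ((add_comm _ _).trans heq)
  have hz2 : z ≤ 2 * max x y :=
    le_mul_max_of_pow_add_pow_eq_pow (by omega) (by omega) (by omega) hAB hx heq
  rcases (by omega : z = 2 ∨ 3 ≤ z) with rfl | hz3
  · omega
  exfalso
  have hxodd : Odd x := odd_of_pow_add_pow_eq (by omega) hz.ne' heq
  have h : IsUnitPowerSolution n x y z := isUnitPowerSolution_of_pow_add_pow_eq hn hxodd heq
  have hodd : Odd n := h.odd_base hn hxodd hz3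
  have hnz : n ^ 2 < z := h.sq_lt_exponent (by omega) hx hxz hyz hz3
  have hzlt : z < 46656 * 7 ^ 2 := h.exponent_lt hn5 hx hy
    (coprime_of_pow_add_pow_eq hodd hxodd hy heq) hxz hyz hz2
  have hne5 : n ≠ 5 := h.ne_five hxodd hxz.le hyz.le (by nlinarith) hzlt
  have hlt15 : n < 15 := h.lt_fifteen hodd h5 hxodd hxz.le hyz.le (by nlinarith) hzlt
  grind
end

section
/- Let p be a prime with p > 3 and p ≡ 3 (mod 4), and let n be a positive integer with pn ≡ ±1 (mod 5). If positive integers x, y, z with x = 1 and y ≤ 2 satisfy (5pn² − 1)^x + (p(p−5)n² + 1)^y = (pn)^z, then (x, y, z) = (1, 1, 2). -/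
/-!
Put `t = p n²` and `u = a t`, with `a = 5` in the theorem. The two bases are `u - 1` and
`1 - u + p t`, and they add up to `p t = (p n)²`. Hence every solution has `z ≥ 2`, so that
`(u - 1)^x + (1 - u)^y ≡ 0` modulo `p t`. Reducing further modulo `p`, which divides `u`, shows that
`x` is odd. Since `u²` vanishes modulo `p t`, the congruence then reads `u x ≡ u y`, and dividing by
`t` gives `a x ≡ a y` modulo `p`. As `5 < p`, this rules out `x = 1`, `y = 2`, and for `x = y = 1`
the left-hand side is `(p n)²`.
-/

theorem odd_of_dvd_sub_one_pow_add_one_sub_pow {p u : ℤ} {x y : ℕ} (hp : 2 < p) (hpu : p ∣ u)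
    (h : p ∣ (u - 1) ^ x + (1 - u) ^ y) : Odd x := by
  by_contra hx
  have hu : u ≡ 0 [ZMOD p] := Int.modEq_zero_iff_dvd.2 hpu
  have two_modEq : (u - 1) ^ x + (1 - u) ^ y ≡ 2 [ZMOD p] := by
    simpa [(Nat.not_odd_iff_even.1 hx).neg_one_pow] using
      ((hu.sub_right 1).pow x).add ((hu.sub_left 1).pow y)
  have p_dvd_two : p ∣ 2 := two_modEq.dvd_iff.1 h
  exact (Int.le_of_dvd two_pos p_dvd_two).not_gt hp

theorem dvd_one_sub_pow_sub_one_sub_mul {R : Type*} [CommRing R] {m u : R} (hm : m ∣ u ^ 2)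
    (k : ℕ) : m ∣ (1 - u) ^ k - (1 - u * k) := by
  have h := sq_dvd_add_pow_sub_sub (-u) 1 k
  rw [neg_sq] at h
  convert hm.trans h using 1
  ring

theorem dvd_mul_sub_of_dvd_sub_one_pow_add_one_sub_pow {R : Type*} [CommRing R] {m u : R}
    {x y : ℕ} (hm : m ∣ u ^ 2) (hx : Odd x) (h : m ∣ (u - 1) ^ x + (1 - u) ^ y) :
    m ∣ u * (y - x) := by
  have hneg : (u - 1) ^ x = -(1 - u) ^ x := by rw [← neg_sub, hx.neg_pow]
  rw [hneg] at h
  have hlin := ((dvd_one_sub_pow_sub_one_sub_mul hm y).sub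
    (dvd_one_sub_pow_sub_one_sub_mul hm x)).sub h
  convert hlin using 1
  ring

theorem mul_modEq_mul_of_dvd_pow_add_pow {p t a : ℤ} {x y : ℕ} (hp : 2 < p) (ht : t ≠ 0)
    (hpt : p ∣ t) (h : p * t ∣ (a * t - 1) ^ x + (1 - a * t) ^ y) :
    a * x ≡ a * y [ZMOD p] := by
  have hx : Odd x := odd_of_dvd_sub_one_pow_add_one_sub_pow hp (hpt.mul_left a)
    ((dvd_mul_right p t).trans h)
  have hsq : p * t ∣ (a * t) ^ 2 := by
    rw [mul_pow, sq t]
    exact (mul_dvd_mul_right hpt t).mul_left _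
  have hdvd : p * t ∣ (a * y - a * x) * t := by
    rw [← mul_sub, mul_right_comm]
    exact dvd_mul_sub_of_dvd_sub_one_pow_add_one_sub_pow hsq hx h
  exact Int.modEq_iff_dvd.2 (Int.dvd_of_mul_dvd_mul_right ht hdvd)

theorem eq_of_mul_modEq_mul_of_mul_sub_lt {a p x y : ℕ} (ha : 0 < a) (hxy : x ≤ y)
    (hlt : a * (y - x) < p) (h : a * x ≡ a * y [MOD p]) : x = y := by
  have hdvd : p ∣ a * (y - x) := by
    rw [Nat.mul_sub]
    exact (Nat.modEq_iff_dvd' (Nat.mul_le_mul_left a hxy)).1 h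
  have hsub : y - x = 0 :=
    (Nat.mul_eq_zero.1 (Nat.eq_zero_of_dvd_of_lt hdvd hlt)).resolve_left ha.ne'
  exact hxy.antisymm (Nat.sub_eq_zero_iff_le.1 hsub)

section Solutions

variable {a p n x y z : ℕ}

theorem base_add_base_eq_sq (ha : 0 < a) (hap : a ≤ p) (hn : 0 < n) :
    (a * p * n ^ 2 - 1) + (p * (p - a) * n ^ 2 + 1) = (p * n) ^ 2 := by
  have hp : 0 < p := ha.trans_le hap
  have hpos : 1 ≤ a * p * n ^ 2 := Nat.succ_le_of_lt (by positivity)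
  zify [hap, hpos]
  ring

theorem two_le_exponent_of_pow_add_pow_eq (ha : 0 < a) (hap : a ≤ p) (hp : 1 < p) (hn : 0 < n)
    (hx : 0 < x) (hy : 0 < y)
    (heq : (a * p * n ^ 2 - 1) ^ x + (p * (p - a) * n ^ 2 + 1) ^ y = (p * n) ^ z) : 2 ≤ z := by
  have hpn : 1 < p * n := Nat.one_lt_mul_iff.2 ⟨by omega, hn, Or.inl hp⟩
  rw [← Nat.pow_le_pow_iff_right hpn, ← heq, ← base_add_base_eq_sq ha hap hn]
  exact add_le_add (Nat.le_self_pow hx.ne' _) (Nat.le_self_pow hy.ne' _)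

theorem mul_modEq_mul_of_pow_add_pow_eq (ha : 0 < a) (hap : a ≤ p) (hp : 2 < p) (hn : 0 < n)
    (hx : 0 < x) (hy : 0 < y)
    (heq : (a * p * n ^ 2 - 1) ^ x + (p * (p - a) * n ^ 2 + 1) ^ y = (p * n) ^ z) :
    a * x ≡ a * y [MOD p] := by
  have hz : 2 ≤ z := two_le_exponent_of_pow_add_pow_eq ha hap (by omega) hn hx hy heq
  have hpos : 1 ≤ a * p * n ^ 2 := Nat.succ_le_of_lt (by positivity)
  zify [hap, hpos] at heq
  set t : ℤ := p * n ^ 2 with ht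
  have hsq : (p * n : ℤ) ^ 2 = p * t := by rw [ht]; ring
  have hfirst : (a * p * n ^ 2 - 1 : ℤ) = a * t - 1 := by rw [ht]; ring
  have hsecond : (p * (p - a) * n ^ 2 + 1 : ℤ) ≡ 1 - a * t [ZMOD p * t] :=
    Int.modEq_iff_dvd.2 ⟨-1, by rw [ht]; ring⟩
  have hdvd : (p * t : ℤ) ∣ (a * t - 1) ^ x + (1 - a * t) ^ y := by
    rw [← ((hsecond.pow y).add_left _).dvd_iff, ← hfirst, heq, ← hsq]
    exact pow_dvd_pow _ hz
  exact_mod_cast mul_modEq_mul_of_dvd_pow_add_pow (by exact_mod_cast hp) (by positivity)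
    (dvd_mul_right _ _) hdvd

theorem stmt_17_general (ha : 0 < a) (hap : a ≤ p) (hp : 2 < p) (hn : 0 < n)
    (hx : 0 < x) (hy : 0 < y) (hxy : a * x ≡ a * y [MOD p] → x = 1 ∧ y = 1)
    (heq : (a * p * n ^ 2 - 1) ^ x + (p * (p - a) * n ^ 2 + 1) ^ y = (p * n) ^ z) :
    x = 1 ∧ y = 1 ∧ z = 2 := by
  obtain ⟨rfl, rfl⟩ := hxy (mul_modEq_mul_of_pow_add_pow_eq ha hap hp hn hx hy heq)
  have hpn : 1 < p * n := Nat.one_lt_mul_iff.2 ⟨by omega, hn, Or.inl (by omega)⟩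
  rw [pow_one, pow_one, base_add_base_eq_sq ha hap hn] at heq
  exact ⟨rfl, rfl, (Nat.pow_right_injective hpn heq).symm⟩

end Solutions

theorem stmt_17 (p n : ℕ) (hp : p.Prime) (hp3 : 3 < p) (hp4 : p % 4 = 3)
    (hn : 0 < n) (h5 : p * n % 5 = 1 ∨ p * n % 5 = 4)
    (x y z : ℕ) (hx : 0 < x) (hy : 0 < y) (hz : 0 < z)
    (hx1 : x = 1) (hy2 : y ≤ 2)
    (heq : (5 * p * n ^ 2 - 1) ^ x + (p * (p - 5) * n ^ 2 + 1) ^ y = (p * n) ^ z) :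
    x = 1 ∧ y = 1 ∧ z = 2 := by
  subst hx1
  exact stmt_17_general (by norm_num) (by omega) (by omega) hn hx hy
    (fun h ↦ ⟨rfl, (eq_of_mul_modEq_mul_of_mul_sub_lt (by norm_num) hy (by omega) h).symm⟩) heq
end
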